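/- arXiv:1501.05425 — 6 statements merged into one kernel-verified Lean document; each statement's English description precedes it below -/
import Mathlib

section
/- There exists exactly one stream x : Stream' ℕ satisfying x = SCons 0 ((SCons 1 x) ⊕ x), where ⊕ is pointwise addition of streams; moreover this unique stream is the stream of Fibonacci numbers: x.get n = Nat.fib n for all n. -/
open Stream'

/-- Pointwise addition of streams. -/
def sadd (xs ys : Stream' ℕ) : Stream' ℕ := fun n => xs.get n + ys.get n

infixl:65 " ⊕ " => sadd

theorem fib_of_eq (x : Stream' ℕ) (h : x = Stream'.cons 0 (sadd (Stream'.cons 1 x) x)) :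
    ∀ n, x.get n = Nat.fib n := by
  have h0 : x.get 0 = 0 := by
    rw [h]; rfl
  have hs : ∀ n, x.get (n + 1) = (Stream'.cons 1 x).get n + x.get n := by
    intro n
    exact congrArg (fun s => Stream'.get s (n + 1)) h
  have h1 : x.get 1 = 1 := by
    have h2 : x.get 1 = 1 + x.get 0 := hs 0
    rw [h2, h0]
  have h2 : ∀ n, x.get (n + 2) = x.get n + x.get (n + 1) := fun n => hs (n + 1)
  intro n
  induction n using Nat.twoStepInduction with
  | zero => simpa using h0
  | one => simpa using h1
  | more n ih1 ih2 => rw [h2, ih1, ih2, Nat.fib_add_two]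

theorem fib_eq :
    (Nat.fib : Stream' ℕ) = Stream'.cons 0 (sadd (Stream'.cons 1 Nat.fib) Nat.fib) := by
  funext n
  match n with
  | 0 => rfl
  | 1 => rfl
  | n + 2 => exact Nat.fib_add_two

theorem stmt_4 :
    (∃! x : Stream' ℕ, x = Stream'.cons 0 ((Stream'.cons 1 x) ⊕ x)) ∧
    (∀ x : Stream' ℕ, x = Stream'.cons 0 ((Stream'.cons 1 x) ⊕ x) →
      ∀ n, x.get n = Nat.fib n) := by
  refine ⟨⟨Nat.fib, fib_eq, ?_⟩, fib_of_eq⟩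
  intro y hy
  funext n
  exact fib_of_eq y hy n
end

section
/- There exists exactly one function f : Finset (Stream' ℕ) → Stream' ℕ satisfying f X = SCons (X.sup head) (f (X.image tail)) for all finite sets X of streams; moreover this unique function computes the pointwise supremum: (f X).get n = X.sup (fun s => s.get n) for all X and n (where the supremum over the empty set is 0). -/
open Stream'
open scoped Classical

theorem stmt_6 :
    (∃! f : Finset (Stream' ℕ) → Stream' ℕ,
      ∀ X : Finset (Stream' ℕ),
        f X = Stream'.cons (X.sup Stream'.head) (f (X.image Stream'.tail))) ∧
    (∀ f : Finset (Stream' ℕ) → Stream' ℕ,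
      (∀ X : Finset (Stream' ℕ),
        f X = Stream'.cons (X.sup Stream'.head) (f (X.image Stream'.tail))) →
      ∀ X n, (f X).get n = X.sup (fun s => s.get n)) := by
  have key : ∀ f : Finset (Stream' ℕ) → Stream' ℕ,
      (∀ X : Finset (Stream' ℕ),
        f X = Stream'.cons (X.sup Stream'.head) (f (X.image Stream'.tail))) →
      ∀ X n, (f X).get n = X.sup (fun s => s.get n) := by
    intro f hf X n
    induction n generalizing X with
    | zero => rw [hf X, Stream'.get_zero_cons]
    | succ k ih =>
      rw [hf X, Stream'.get_succ_cons, ih, Finset.sup_image]; rfl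
  refine ⟨⟨fun X => (fun n => X.sup (fun s => s.get n) : ℕ → ℕ), ?_, ?_⟩, key⟩
  · intro X
    apply Stream'.ext
    intro n
    cases n with
    | zero => rfl
    | succ k =>
      change X.sup (fun s => s.get (k + 1)) = (X.image Stream'.tail).sup (fun s => s.get k)
      rw [Finset.sup_image]; rfl
  · intro g hg
    funext X
    apply Stream'.ext
    intro n
    exact key g hg X n
end

section
/- There exists exactly one function f : ℕ → ℕ → ℕ → Stream' ℕ satisfying the mixed recursive–corecursive equation f n a i = (if i = 0 then SCons a (f (n + 1) 1 (n + 1)) else f n (a * i) (i − 1)) for all n, a, i; moreover this unique function satisfies (f 1 1 1).get k = (k + 1)! for all k (it computes the stream of factorials starting at 1). -/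
open Stream'

theorem fact_unfold (f : ℕ → ℕ → ℕ → Stream' ℕ)
    (hf : ∀ n a i, f n a i =
        if i = 0 then Stream'.cons a (f (n + 1) 1 (n + 1)) else f n (a * i) (i - 1)) :
    ∀ i n a, f n a i = Stream'.cons (a * Nat.factorial i) (f (n + 1) 1 (n + 1)) := by
  intro i
  induction i with
  | zero => intro n a; rw [hf]; simp
  | succ i ih =>
    intro n a
    rw [hf, if_neg (Nat.succ_ne_zero i), Nat.add_sub_cancel, ih, Nat.factorial_succ, mul_assoc]

theorem fact_get (f : ℕ → ℕ → ℕ → Stream' ℕ)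
    (hf : ∀ n a i, f n a i =
        if i = 0 then Stream'.cons a (f (n + 1) 1 (n + 1)) else f n (a * i) (i - 1)) :
    ∀ k n a i, (f n a i).get k =
      if k = 0 then a * Nat.factorial i else Nat.factorial (n + k) := by
  intro k
  induction k with
  | zero => intro n a i; rw [fact_unfold f hf]; simp [Stream'.get, Stream'.cons]
  | succ k ih =>
    intro n a i
    rw [fact_unfold f hf, Stream'.get_succ_cons, ih, if_neg (Nat.succ_ne_zero k)]
    split_ifs with h
    · subst h; simp
    · congr 1; omega

def factSol (n a i : ℕ) : Stream' ℕ :=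
  fun k => if k = 0 then a * Nat.factorial i else Nat.factorial (n + k)

theorem factSol_get (n a i k : ℕ) : (factSol n a i).get k =
    if k = 0 then a * Nat.factorial i else Nat.factorial (n + k) := rfl

theorem stmt_14 :
    (∃! f : ℕ → ℕ → ℕ → Stream' ℕ,
      ∀ n a i, f n a i =
        if i = 0 then Stream'.cons a (f (n + 1) 1 (n + 1)) else f n (a * i) (i - 1)) ∧
    (∀ f : ℕ → ℕ → ℕ → Stream' ℕ,
      (∀ n a i, f n a i =
        if i = 0 then Stream'.cons a (f (n + 1) 1 (n + 1)) else f n (a * i) (i - 1)) →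
      ∀ k, (f 1 1 1).get k = Nat.factorial (k + 1)) := by
  refine ⟨⟨factSol, ?_, ?_⟩, ?_⟩
  · intro n a i
    cases i with
    | zero =>
      rw [if_pos rfl]
      apply Stream'.ext
      intro k
      cases k with
      | zero => simp [factSol_get]
      | succ k =>
        rw [Stream'.get_succ_cons, factSol_get, factSol_get, if_neg (Nat.succ_ne_zero k)]
        split_ifs with h
        · subst h; simp
        · congr 1; omega
    | succ i =>
      rw [if_neg (Nat.succ_ne_zero i), Nat.add_sub_cancel]
      apply Stream'.ext
      intro k
      simp only [factSol_get, Nat.factorial_succ, mul_assoc]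
  · intro g hg
    funext n a i
    apply Stream'.ext
    intro k
    rw [fact_get g hg k n a i, factSol_get]
  · intro f hf k
    rw [fact_get f hf]
    split_ifs with h
    · subst h; simp
    · rw [add_comm]
end

section
/- There exists exactly one function f : ℕ → ℕ → Stream' ℕ satisfying the mixed recursive–corecursive equation f m n = (if (m = 0 ∧ n > 1) ∨ Nat.gcd m n = 1 then SCons n (f (m * n) (n + 1)) else f m (n + 1)) for all m, n; moreover f 1 2 is the stream of all prime numbers in increasing order: (f 1 2).get k = Nat.nth Nat.Prime k for all k. -/
open Stream'

def PP (m n : ℕ) : Prop := (m = 0 ∧ n > 1) ∨ Nat.gcd m n = 1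

lemma PP_ex (m n : ℕ) : ∃ j, PP m (n + j) := by
  rcases Nat.eq_zero_or_pos m with h | h
  · exact ⟨2, Or.inl ⟨h, by omega⟩⟩
  · refine ⟨m * n + 1 - n, Or.inr ?_⟩
    have : n ≤ m * n := Nat.le_mul_of_pos_left n h
    rw [show n + (m * n + 1 - n) = m * n + 1 by omega]
    simp

open Classical in
noncomputable def nx (m n : ℕ) : ℕ := n + Nat.find (PP_ex m n)

lemma nx_pos {m n : ℕ} (h : PP m n) : nx m n = n := by
  classical
  have : Nat.find (PP_ex m n) = 0 := by
    rw [Nat.find_eq_zero]; exact h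
  unfold nx
  simpa using this

lemma nx_neg {m n : ℕ} (h : ¬ PP m n) : nx m n = nx m (n + 1) := by
  classical
  have h2 : ∃ j, PP m (n + (j + 1)) := by
    obtain ⟨j, hj⟩ := PP_ex m (n + 1)
    exact ⟨j, by rwa [show n + (j + 1) = n + 1 + j by ring]⟩
  have := Nat.find_comp_succ (PP_ex m n) h2 h
  have h3 : Nat.find h2 = Nat.find (PP_ex m (n + 1)) := by
    congr 1
    funext j
    rw [show n + (j + 1) = n + 1 + j by ring]
  unfold nx
  have h4 : Nat.find (PP_ex m n) = Nat.find (PP_ex m (n + 1)) + 1 := by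
    rw [← h3]; convert this
  omega

noncomputable def FF : ℕ → ℕ → ℕ → ℕ
  | 0, m, n => nx m n
  | k + 1, m, n => FF k (m * nx m n) (nx m n + 1)

def Sol (f : ℕ → ℕ → Stream' ℕ) : Prop := ∀ m n, f m n =
        if (m = 0 ∧ n > 1) ∨ Nat.gcd m n = 1
        then Stream'.cons n (f (m * n) (n + 1))
        else f m (n + 1)

lemma Sol.pos {f} (hf : Sol f) {m n : ℕ} (h : PP m n) :
    f m n = Stream'.cons n (f (m * n) (n + 1)) := by
  have := hf m n
  unfold PP at h
  rwa [if_pos h] at this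

lemma Sol.neg {f} (hf : Sol f) {m n : ℕ} (h : ¬ PP m n) : f m n = f m (n + 1) := by
  have := hf m n
  unfold PP at h
  rwa [if_neg h] at this

lemma Sol.step {f} (hf : Sol f) (m n : ℕ) :
    f m n = Stream'.cons (nx m n) (f (m * nx m n) (nx m n + 1)) := by
  obtain ⟨j, hj⟩ := PP_ex m n
  induction j generalizing n with
  | zero =>
    have hj : PP m n := hj
    rw [nx_pos hj]; exact hf.pos hj
  | succ j ih =>
    by_cases h : PP m n
    · rw [nx_pos h]; exact hf.pos h
    · rw [nx_neg h, hf.neg h]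
      exact ih (n + 1) (by rwa [show n + 1 + j = n + (j + 1) by ring])

lemma Sol.get {f} (hf : Sol f) (k m n : ℕ) : (f m n).get k = FF k m n := by
  induction k generalizing m n with
  | zero => rw [hf.step]; rfl
  | succ k ih => rw [hf.step, Stream'.get_succ_cons, ih]; rfl

noncomputable def GG (m n : ℕ) : Stream' ℕ := fun k => FF k m n

lemma Sol_FF : Sol GG := by
  intro m n
  apply Stream'.ext
  intro k
  by_cases h : PP m n
  · have h' := h
    unfold PP at h'
    rw [if_pos h']
    cases k with
    | zero => exact nx_pos h
    | succ k =>
      change FF k (m * nx m n) (nx m n + 1) = FF k (m * n) (n + 1)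
      rw [nx_pos h]
  · have h' := h
    unfold PP at h'
    rw [if_neg h']
    cases k with
    | zero => exact nx_neg h
    | succ k =>
      change FF k (m * nx m n) (nx m n + 1) = FF k (m * nx m (n + 1)) (nx m (n + 1) + 1)
      rw [nx_neg h]

lemma Sol.primes {f} (hf : Sol f) (j : ℕ) : ∀ d m n : ℕ, 2 ≤ n → m ≠ 0 →
    (∀ p, p.Prime → (p ∣ m ↔ p < n)) → (n + d).Prime →
    (f m n).get j = Nat.nth Nat.Prime (Nat.count Nat.Prime n + j) := by
  induction j with
  | zero =>
    intro d
    induction d with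
    | zero =>
      intro m n hn hm hp hd
      have hd : n.Prime := hd
      have h : PP m n := by
        right
        exact ((Nat.Prime.coprime_iff_not_dvd hd).2 (by rw [hp n hd]; omega)).symm
      rw [hf.pos h, Nat.add_zero (Nat.count Nat.Prime n), Nat.nth_count hd]; rfl
    | succ d ih =>
      intro m n hn hm hp hd
      by_cases hq : n.Prime
      · have h : PP m n := by
          right
          exact ((Nat.Prime.coprime_iff_not_dvd hq).2 (by rw [hp n hq]; omega)).symm
        rw [hf.pos h, Nat.add_zero (Nat.count Nat.Prime n), Nat.nth_count hq]; rfl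
      · have h : ¬ PP m n := by
          rintro (h | h)
          · exact hm h.1
          · have h1 := Nat.minFac_prime (n := n) (by omega)
            have h2 := (Nat.not_prime_iff_minFac_lt hn).1 hq
            exact Nat.Prime.not_coprime_iff_dvd.2
              ⟨_, h1, (hp _ h1).2 h2, Nat.minFac_dvd n⟩ h
        rw [hf.neg h, ih m (n + 1) (by omega) hm _ (by rwa [show n + 1 + d = n + (d + 1) by ring]),
          Nat.count_succ, if_neg hq, Nat.add_zero]
        intro p pp
        rw [hp p pp]
        have : p ≠ n := by rintro rfl; exact hq pp
        omega
  | succ j ihj =>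
    have main : ∀ m n : ℕ, 2 ≤ n → m ≠ 0 →
        (∀ p, p.Prime → (p ∣ m ↔ p < n)) → n.Prime →
        (f m n).get (j + 1) = Nat.nth Nat.Prime (Nat.count Nat.Prime n + (j + 1)) := by
      intro m n hn hm hp hq
      have h : PP m n := by
        right
        exact ((Nat.Prime.coprime_iff_not_dvd hq).2 (by rw [hp n hq]; omega)).symm
      obtain ⟨q, hq1, hq2⟩ := Nat.exists_infinite_primes (n + 1)
      rw [hf.pos h, Stream'.get_succ_cons, ihj (q - (n + 1)) (m * n) (n + 1) (by omega)
        (Nat.mul_ne_zero hm (by omega)) _ (by rwa [Nat.add_sub_cancel' hq1]),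
        Nat.count_succ, if_pos hq]
      · congr 1; ring
      · intro p pp
        rw [pp.dvd_mul, hp p pp, Nat.prime_dvd_prime_iff_eq pp hq]
        omega
    intro d
    induction d with
    | zero => exact main
    | succ d ih =>
      intro m n hn hm hp hd
      by_cases hq : n.Prime
      · exact main m n hn hm hp hq
      · have h : ¬ PP m n := by
          rintro (h | h)
          · exact hm h.1
          · have h1 := Nat.minFac_prime (n := n) (by omega)
            have h2 := (Nat.not_prime_iff_minFac_lt hn).1 hq
            exact Nat.Prime.not_coprime_iff_dvd.2
              ⟨_, h1, (hp _ h1).2 h2, Nat.minFac_dvd n⟩ h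
        rw [hf.neg h, ih m (n + 1) (by omega) hm _ (by rwa [show n + 1 + d = n + (d + 1) by ring]),
          Nat.count_succ, if_neg hq, Nat.add_zero]
        intro p pp
        rw [hp p pp]
        have : p ≠ n := by rintro rfl; exact hq pp
        omega

theorem stmt_15 :
    (∃! f : ℕ → ℕ → Stream' ℕ,
      ∀ m n, f m n =
        if (m = 0 ∧ n > 1) ∨ Nat.gcd m n = 1
        then Stream'.cons n (f (m * n) (n + 1))
        else f m (n + 1)) ∧
    (∀ f : ℕ → ℕ → Stream' ℕ,
      (∀ m n, f m n =
        if (m = 0 ∧ n > 1) ∨ Nat.gcd m n = 1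
        then Stream'.cons n (f (m * n) (n + 1))
        else f m (n + 1)) →
      ∀ k, (f 1 2).get k = Nat.nth Nat.Prime k) := by
  refine ⟨⟨GG, Sol_FF, ?_⟩, ?_⟩
  · intro g hg
    funext m n
    apply Stream'.ext
    intro k
    exact Sol.get hg k m n
  · intro f hf k
    have h := Sol.primes (f := f) hf k 0 1 2 le_rfl one_ne_zero (by
      intro p pp
      have := pp.two_le
      rw [Nat.dvd_one]; omega) Nat.prime_two
    have h0 : Nat.count Nat.Prime 2 = 0 := by decide
    rw [h, h0, Nat.zero_add]
end

section
/- There is no function f : ℕ → Stream' ℕ satisfying the equation f n = (if n < 2 then SCons n (f (n + 1)) else Stream'.map (fun x => x + 1) (tail (f (n − 1)))) for all n. -/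
open Stream'

theorem stmt_17 :
    ¬ ∃ f : ℕ → Stream' ℕ,
      ∀ n, f n =
        if n < 2 then Stream'.cons n (f (n + 1))
        else Stream'.map (fun x => x + 1) (Stream'.tail (f (n - 1))) := by
  rintro ⟨f, hf⟩
  have h1 : f 1 = Stream'.cons 1 (f 2) := by
    have h := hf 1
    rwa [if_pos (by norm_num)] at h
  have h2 : f 2 = Stream'.map (fun x => x + 1) (Stream'.tail (f 1)) := by
    have h := hf 2
    rwa [if_neg (by norm_num)] at h
  rw [h1, Stream'.tail_cons] at h2
  have h3 : (f 2).head = (f 2).head + 1 := by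
    have h := congrArg Stream'.head h2
    rwa [Stream'.head_map] at h
  omega
end

section
/- There exists exactly one function f : (ℕ → Bool) → Stream'.Seq ℕ → Stream'.Seq ℕ such that for every predicate p and every possibly infinite sequence s: (i) if no element of s satisfies p (i.e., ∀ a ∈ s, p a = false) then f p s = Seq.nil, and (ii) for all a and s', if s = Seq.cons a s' then f p s = Seq.cons a (f p s') when p a = true, and f p s = f p s' when p a = false. (This is the filter function on lazy lists.) -/
open Stream'

inductive FirstHit (p : ℕ → Bool) : Stream'.Seq ℕ → ℕ → Stream'.Seq ℕ → Prop
  | here (s : Stream'.Seq ℕ) (a : ℕ) (t : Stream'.Seq ℕ) (hs : s = Stream'.Seq.cons a t)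
      (h : p a = true) : FirstHit p s a t
  | there (s : Stream'.Seq ℕ) (a : ℕ) (s' : Stream'.Seq ℕ) (x : ℕ) (t : Stream'.Seq ℕ)
      (hs : s = Stream'.Seq.cons a s') (h : p a = false) (ht : FirstHit p s' x t) :
      FirstHit p s x t

theorem firstHit_cons (p : ℕ → Bool) (a : ℕ) (s : Stream'.Seq ℕ) (x : ℕ) (t : Stream'.Seq ℕ) :
    FirstHit p (Stream'.Seq.cons a s) x t ↔
      (p a = true ∧ x = a ∧ t = s) ∨ (p a = false ∧ FirstHit p s x t) := by
  constructor
  · intro h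
    cases h with
    | here _ _ _ hs h =>
      obtain ⟨rfl, rfl⟩ := Stream'.Seq.cons_eq_cons.1 hs
      exact Or.inl ⟨h, rfl, rfl⟩
    | there _ b s' _ _ hs h ht =>
      obtain ⟨rfl, rfl⟩ := Stream'.Seq.cons_eq_cons.1 hs
      exact Or.inr ⟨h, ht⟩
  · rintro (⟨h, rfl, rfl⟩ | ⟨h, ht⟩)
    · exact .here _ _ _ rfl h
    · exact .there _ _ _ _ _ rfl h ht

theorem FirstHit.mem {p : ℕ → Bool} {s : Stream'.Seq ℕ} {x : ℕ} {t : Stream'.Seq ℕ}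
    (h : FirstHit p s x t) : x ∈ s ∧ p x = true := by
  induction h with
  | here s a t hs h => subst hs; exact ⟨Stream'.Seq.mem_cons _ _, h⟩
  | there s a s' x t hs h ht ih =>
    subst hs; exact ⟨Stream'.Seq.mem_cons_of_mem _ ih.1, ih.2⟩

theorem FirstHit.exists_of_mem {p : ℕ → Bool} {s : Stream'.Seq ℕ} {a : ℕ}
    (h : a ∈ s) (ha : p a = true) : ∃ x : ℕ × Stream'.Seq ℕ, FirstHit p s x.1 x.2 := by
  refine Stream'.Seq.mem_rec_on (C := fun s => ∃ x : ℕ × Stream'.Seq ℕ, FirstHit p s x.1 x.2) h ?_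
  intro b s' hb
  cases hpb : p b with
  | true => exact ⟨(b, s'), .here _ _ _ rfl hpb⟩
  | false =>
    rcases hb with rfl | ⟨x, hx⟩
    · simp [ha] at hpb
    · exact ⟨x, .there _ _ _ _ _ rfl hpb hx⟩

open Classical in
noncomputable def filterStep (p : ℕ → Bool) (s : Stream'.Seq ℕ) : Option (ℕ × Stream'.Seq ℕ) :=
  if h : ∃ x : ℕ × Stream'.Seq ℕ, FirstHit p s x.1 x.2 then some h.choose else none

theorem filterStep_true (p : ℕ → Bool) (a : ℕ) (s : Stream'.Seq ℕ) (ha : p a = true) :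
    filterStep p (Stream'.Seq.cons a s) = some (a, s) := by
  have h : ∃ x : ℕ × Stream'.Seq ℕ, FirstHit p (Stream'.Seq.cons a s) x.1 x.2 :=
    ⟨(a, s), .here _ _ _ rfl ha⟩
  rw [filterStep, dif_pos h]
  have := h.choose_spec
  rw [firstHit_cons] at this
  rcases this with ⟨_, h1, h2⟩ | ⟨h1, _⟩
  · exact congrArg some (Prod.ext h1 h2)
  · simp [ha] at h1

theorem filterStep_false (p : ℕ → Bool) (a : ℕ) (s : Stream'.Seq ℕ) (ha : p a = false) :
    filterStep p (Stream'.Seq.cons a s) = filterStep p s := by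
  have h : (fun x : ℕ × Stream'.Seq ℕ => FirstHit p (Stream'.Seq.cons a s) x.1 x.2) =
      fun x => FirstHit p s x.1 x.2 := by
    funext x
    simp [firstHit_cons, ha]
  unfold filterStep
  rw! [h]
  rfl

theorem corec_congr_step (p : ℕ → Bool) (s t : Stream'.Seq ℕ)
    (h : filterStep p s = filterStep p t) :
    Stream'.Seq.corec (filterStep p) s = Stream'.Seq.corec (filterStep p) t := by
  cases ht : filterStep p t with
  | none => rw [Stream'.Seq.corec_nil _ _ ht, Stream'.Seq.corec_nil _ _ (h.trans ht)]
  | some x => rw [Stream'.Seq.corec_cons ht, Stream'.Seq.corec_cons (h.trans ht)]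

def IsFilter (f : (ℕ → Bool) → Stream'.Seq ℕ → Stream'.Seq ℕ) : Prop :=
  ∀ (p : ℕ → Bool) (s : Stream'.Seq ℕ),
    ((∀ a ∈ s, p a = false) → f p s = Stream'.Seq.nil) ∧
    (∀ (a : ℕ) (s' : Stream'.Seq ℕ), s = Stream'.Seq.cons a s' →
      (p a = true → f p s = Stream'.Seq.cons a (f p s')) ∧
      (p a = false → f p s = f p s'))

theorem IsFilter.eq_cons {f : (ℕ → Bool) → Stream'.Seq ℕ → Stream'.Seq ℕ} (hf : IsFilter f)
    {p : ℕ → Bool} {s : Stream'.Seq ℕ} {x : ℕ} {t : Stream'.Seq ℕ}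
    (h : FirstHit p s x t) : f p s = Stream'.Seq.cons x (f p t) := by
  induction h with
  | here s a t hs h => exact ((hf p s).2 a t hs).1 h
  | there s a s' x t hs h ht ih => rw [((hf p s).2 a s' hs).2 h, ih]

theorem IsFilter.unique {f g : (ℕ → Bool) → Stream'.Seq ℕ → Stream'.Seq ℕ} (hf : IsFilter f)
    (hg : IsFilter g) (p : ℕ → Bool) (s : Stream'.Seq ℕ) : f p s = g p s := by
  refine Stream'.Seq.eq_of_bisim (fun s₁ s₂ => ∃ s, s₁ = f p s ∧ s₂ = g p s) ?_ ⟨s, rfl, rfl⟩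
  rintro _ _ ⟨s, rfl, rfl⟩
  by_cases h : ∀ a ∈ s, p a = false
  · rw [(hf p s).1 h, (hg p s).1 h]
    simp [Stream'.Seq.BisimO]
  · push Not at h
    obtain ⟨a, ha, hpa⟩ := h
    obtain ⟨⟨x, t⟩, hx⟩ := FirstHit.exists_of_mem ha (by simpa using hpa)
    rw [hf.eq_cons hx, hg.eq_cons hx]
    simp only [Stream'.Seq.destruct_cons, Stream'.Seq.BisimO]
    exact ⟨trivial, t, rfl, rfl⟩


theorem stmt_18 :
    ∃! f : (ℕ → Bool) → Stream'.Seq ℕ → Stream'.Seq ℕ,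
      ∀ (p : ℕ → Bool) (s : Stream'.Seq ℕ),
        ((∀ a ∈ s, p a = false) → f p s = Stream'.Seq.nil) ∧
        (∀ (a : ℕ) (s' : Stream'.Seq ℕ), s = Stream'.Seq.cons a s' →
          (p a = true → f p s = Stream'.Seq.cons a (f p s')) ∧
          (p a = false → f p s = f p s')) := by

  refine ⟨fun p s => Stream'.Seq.corec (filterStep p) s, ?_, ?_⟩
  · intro p s
    refine ⟨fun h => ?_, ?_⟩
    · apply Stream'.Seq.corec_nil
      rw [filterStep, dif_neg]
      rintro ⟨x, hx⟩
      have := hx.mem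
      simp [h _ this.1] at this
    · rintro a s' rfl
      exact ⟨fun ha => Stream'.Seq.corec_cons (filterStep_true p a s' ha),
        fun ha => corec_congr_step _ _ _ (filterStep_false p a s' ha)⟩
  · intro g hg
    funext p s
    refine IsFilter.unique (f := g) (g := fun p s => Stream'.Seq.corec (filterStep p) s)
      hg ?_ p s
    intro p s
    refine ⟨fun h => ?_, ?_⟩
    · apply Stream'.Seq.corec_nil
      rw [filterStep, dif_neg]
      rintro ⟨x, hx⟩
      have := hx.mem
      simp [h _ this.1] at this
    · rintro a s' rfl
      exact ⟨fun ha => Stream'.Seq.corec_cons (filterStep_true p a s' ha),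
        fun ha => corec_congr_step _ _ _ (filterStep_false p a s' ha)⟩
end
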